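/- For every integer n ≥ 3 there exists a connected combinatorial hypermap T with hyperedge set E(T) = {e₁, …, e_n} such that for every A ⊆ E(T): if e_n ∉ A and |A| ≤ n − 2 then ε(T^A) = 2|A|; if either (e_n ∈ A and |A| = 1) or (e_n ∉ A and |A| = n − 1) then ε(T^A) = 2n − 4; and if e_n ∈ A and 2 ≤ |A| ≤ n then ε(T^A) = 2n − 2|A|. -/

import Mathlib

open Classical

/-- A pre-hypermap on a set of flags `F`: three structure maps `θ₀, θ₁, θ₂`.
It is a genuine combinatorial hypermap when the three maps are
fixed-point-free involutions (see `PreHypermap.IsHypermap`). -/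
structure PreHypermap (F : Type*) where
  theta : Fin 3 → F → F

namespace PreHypermap

variable {F : Type*}

/-- `H` is a combinatorial hypermap: `θ₀, θ₁, θ₂` are fixed-point-free involutions. -/
def IsHypermap (H : PreHypermap F) : Prop :=
  ∀ i : Fin 3, Function.Involutive (H.theta i) ∧ ∀ x : F, H.theta i x ≠ x

/-- The equivalence relation on `F` generated by a set of functions `F → F`;
for a set of involutions, two flags are related iff they are in the same orbit
of the subgroup generated by those involutions. -/
def orbitRel (fs : Set (F → F)) : F → F → Prop :=
  Relation.EqvGen (fun x y => ∃ f ∈ fs, f x = y)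

/-- The setoid of orbits of the subgroup generated by a set of involutions. -/
def orbitSetoid (fs : Set (F → F)) : Setoid F :=
  Relation.EqvGen.setoid (fun x y => ∃ f ∈ fs, f x = y)

/-- The number of orbits on `F` of the subgroup generated by a set of involutions. -/
noncomputable def orbitCount (fs : Set (F → F)) : ℕ :=
  Nat.card (Quotient (orbitSetoid fs))

/-- `v H`: the number of vertices, i.e. orbits of `⟨θ₁, θ₂⟩`. -/
noncomputable def v (H : PreHypermap F) : ℕ := orbitCount {H.theta 1, H.theta 2}

/-- `e H`: the number of hyperedges, i.e. orbits of `⟨θ₀, θ₂⟩`. -/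
noncomputable def e (H : PreHypermap F) : ℕ := orbitCount {H.theta 0, H.theta 2}

/-- `f H`: the number of faces, i.e. orbits of `⟨θ₀, θ₁⟩`. -/
noncomputable def f (H : PreHypermap F) : ℕ := orbitCount {H.theta 0, H.theta 1}

/-- `c H`: the number of components, i.e. orbits of `⟨θ₀, θ₁, θ₂⟩`. -/
noncomputable def c (H : PreHypermap F) : ℕ :=
  orbitCount {H.theta 0, H.theta 1, H.theta 2}

/-- `H` is connected if it has exactly one component. -/
def Connected (H : PreHypermap F) : Prop := H.c = 1

/-- The Euler characteristic `χ(H) = v + e + f - |F|/2`. -/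
noncomputable def chi (H : PreHypermap F) : ℤ :=
  (H.v : ℤ) + (H.e : ℤ) + (H.f : ℤ) - (Nat.card F : ℤ) / 2

/-- The Euler genus `ε(H) = 2 c(H) - χ(H)`. -/
noncomputable def eulerGenus (H : PreHypermap F) : ℤ := 2 * (H.c : ℤ) - H.chi

/-- `H` is orientable: there is `o : F → {+1, -1}` with `o (θᵢ x) = - o x` for all `i, x`. -/
def Orientable (H : PreHypermap F) : Prop :=
  ∃ o : F → ℤ, (∀ x : F, o x = 1 ∨ o x = -1) ∧
    ∀ (i : Fin 3) (x : F), o (H.theta i x) = - o x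

/-- The set `E(H)` of hyperedges of `H`, each hyperedge being its set of flags
(an orbit of `⟨θ₀, θ₂⟩`). -/
def edges (H : PreHypermap F) : Set (Set F) :=
  {s : Set F | ∃ x : F, s = {y : F | orbitRel {H.theta 0, H.theta 2} x y}}

/-- The geometric dual `H* = (F, θ₂, θ₁, θ₀)`. -/
def dual (H : PreHypermap F) : PreHypermap F where
  theta := fun i => H.theta (2 - i)

/-- The partial dual of `H` with respect to a set `S` of flags (interchange `θ₀` and
`θ₂` on `S`); for `A ⊆ E(H)` the partial dual `H^A` is `H.pdual (⋃₀ A)`. -/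
noncomputable def pdual (H : PreHypermap F) (S : Set F) : PreHypermap F where
  theta := fun i x =>
    if i = 1 then H.theta 1 x
    else if x ∈ S then H.theta (2 - i) x else H.theta i x

/-- `f(A)` for `A ⊆ E(H)`: the number of orbits of `⟨θ₁, θ₂^A⟩` (which equals `v(H^A)`). -/
noncomputable def subf (H : PreHypermap F) (A : Set (Set F)) : ℕ :=
  (H.pdual (⋃₀ A)).v

/-- `c(A)` for `A ⊆ E(H)`: the number of orbits of the subgroup generated by `θ₁`, `θ₂`
and the permutation equal to `θ₀` on `S(A)` and the identity elsewhere. -/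
noncomputable def subc (H : PreHypermap F) (A : Set (Set F)) : ℕ :=
  orbitCount {H.theta 1, H.theta 2, fun x => if x ∈ ⋃₀ A then H.theta 0 x else x}

/-- `χ(A) = v(A) + e(A) + f(A) - |S(A)|/2` for `A ⊆ E(H)`, where `v(A) = v(H)`,
`e(A) = |A|`, `f(A) = v(H^A)` and `S(A) = ⋃₀ A`. -/
noncomputable def subchi (H : PreHypermap F) (A : Set (Set F)) : ℤ :=
  (H.v : ℤ) + (A.ncard : ℤ) + (H.subf A : ℤ) - ((⋃₀ A).ncard : ℤ) / 2

/-- `ε(A) = 2 c(A) - χ(A)` for `A ⊆ E(H)`. -/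
noncomputable def subeps (H : PreHypermap F) (A : Set (Set F)) : ℤ :=
  2 * (H.subc A : ℤ) - H.subchi A

/-- The hyperedge set of `H` as a finset. -/
noncomputable def edgeFinset (H : PreHypermap F) [Fintype F] : Finset (Set F) :=
  (Set.toFinite H.edges).toFinset

/-- The partial-dual Euler-genus polynomial `∂ε_H(z) = Σ_{A ⊆ E(H)} z^(ε(H^A))`. -/
noncomputable def pdPoly (H : PreHypermap F) [Fintype F] : Polynomial ℕ :=
  ∑ A ∈ H.edgeFinset.powerset,
    Polynomial.X ^ ((H.pdual (⋃₀ (A : Set (Set F)))).eulerGenus).toNat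

/-- The partial-dual orientable-genus polynomial `∂Γ_H(z) = Σ_{A ⊆ E(H)} z^(ε(H^A)/2)`. -/
noncomputable def pdGammaPoly (H : PreHypermap F) [Fintype F] : Polynomial ℕ :=
  ∑ A ∈ H.edgeFinset.powerset,
    Polynomial.X ^ (((H.pdual (⋃₀ (A : Set (Set F)))).eulerGenus) / 2).toNat

/-- The join `H₁ ∨ H₂` of two hypermaps on disjoint flag sets, joining the corner
`{x, θ₁ x}` of `H₁` to the corner `{y, θ₁′ y}` of `H₂`. -/
noncomputable def join {F₁ F₂ : Type*} (H₁ : PreHypermap F₁) (H₂ : PreHypermap F₂)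
    (x : F₁) (y : F₂) : PreHypermap (F₁ ⊕ F₂) where
  theta := fun i z =>
    if i = 1 then
      if z = Sum.inl x then Sum.inr y
      else if z = Sum.inr y then Sum.inl x
      else if z = Sum.inl (H₁.theta 1 x) then Sum.inr (H₂.theta 1 y)
      else if z = Sum.inr (H₂.theta 1 y) then Sum.inl (H₁.theta 1 x)
      else Sum.map (H₁.theta 1) (H₂.theta 1) z
    else Sum.map (H₁.theta i) (H₂.theta i) z

/-- The bar-amalgamation `H₁ ⊕ H₂` of two hypermaps on disjoint flag sets, with a new
connecting hyperedge `{p, q, p', q'} = Fin 4` meeting the corner `{x, θ₁ x}` of `H₁`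
and the corner `{y, θ₁′ y}` of `H₂`. -/
noncomputable def bar {F₁ F₂ : Type*} (H₁ : PreHypermap F₁) (H₂ : PreHypermap F₂)
    (x : F₁) (y : F₂) : PreHypermap ((F₁ ⊕ F₂) ⊕ Fin 4) where
  theta := fun i z =>
    if i = 0 then
      match z with
      | .inl (.inl a) => .inl (.inl (H₁.theta 0 a))
      | .inl (.inr b) => .inl (.inr (H₂.theta 0 b))
      | .inr k => .inr (Equiv.swap (0 : Fin 4) 2 (Equiv.swap (1 : Fin 4) 3 k))
    else if i = 2 then
      match z with
      | .inl (.inl a) => .inl (.inl (H₁.theta 2 a))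
      | .inl (.inr b) => .inl (.inr (H₂.theta 2 b))
      | .inr k => .inr (Equiv.swap (0 : Fin 4) 1 (Equiv.swap (2 : Fin 4) 3 k))
    else
      if z = .inl (.inl x) then .inr 0
      else if z = .inr 0 then .inl (.inl x)
      else if z = .inl (.inl (H₁.theta 1 x)) then .inr 1
      else if z = .inr 1 then .inl (.inl (H₁.theta 1 x))
      else if z = .inl (.inr y) then .inr 2
      else if z = .inr 2 then .inl (.inr y)
      else if z = .inl (.inr (H₂.theta 1 y)) then .inr 3
      else if z = .inr 3 then .inl (.inr (H₂.theta 1 y))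
      else
        match z with
        | .inl (.inl a) => .inl (.inl (H₁.theta 1 a))
        | .inl (.inr b) => .inl (.inr (H₂.theta 1 b))
        | .inr k => .inr k

end PreHypermap

namespace S17
open PreHypermap

inductive K3 | b | c | d
deriving DecidableEq

instance : Fintype K3 := ⟨{K3.b, K3.c, K3.d}, by intro x; cases x <;> simp⟩

abbrev Fl (N : ℕ) := (ZMod N × K3) × Bool

variable {N : ℕ}

/-- edge label -/
def lab (x : Fl N) : Option (ZMod N) :=
  match x with
  | ((_, K3.c), _) => none
  | ((i, _), _) => some i

noncomputable def th (L : Set (Option (ZMod N))) (x : Fl N) : Fl N :=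
  match x with
  | ((i, K3.b), s) => if some i ∈ L then ((i, K3.d), !s) else ((i, K3.b), !s)
  | ((i, K3.d), s) => if some i ∈ L then ((i, K3.b), !s) else ((i, K3.d), !s)
  | ((i, K3.c), true) => if none ∈ L then ((i + 1, K3.c), false) else ((i, K3.c), false)
  | ((i, K3.c), false) => if none ∈ L then ((i - 1, K3.c), true) else ((i, K3.c), true)

def t1 (x : Fl N) : Fl N :=
  match x with
  | ((i, K3.b), true) => ((i - 1, K3.d), false)
  | ((i, K3.c), true) => ((i, K3.b), false)
  | ((i, K3.d), true) => ((i + 1, K3.c), false)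
  | ((i, K3.b), false) => ((i, K3.c), true)
  | ((i, K3.c), false) => ((i - 1, K3.d), true)
  | ((i, K3.d), false) => ((i + 1, K3.b), true)

noncomputable def hm (L : Set (Option (ZMod N))) : PreHypermap (Fl N) where
  theta := ![th L, t1, th Lᶜ]

lemma th_inv (L : Set (Option (ZMod N))) : Function.Involutive (th L) := by
  rintro ⟨⟨i, k⟩, s⟩
  cases k <;> cases s <;> simp only [th] <;> split_ifs <;> simp_all [th]

lemma t1_inv : Function.Involutive (t1 (N := N)) := by
  rintro ⟨⟨i, k⟩, s⟩
  cases k <;> cases s <;> simp [t1]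

lemma th_ne (L : Set (Option (ZMod N))) (x) : th L x ≠ x := by
  obtain ⟨⟨i, k⟩, s⟩ := x
  cases k <;> cases s <;> simp only [th] <;> split_ifs <;> simp

lemma t1_ne (x : Fl N) : t1 x ≠ x := by
  obtain ⟨⟨i, k⟩, s⟩ := x
  cases k <;> cases s <;> simp [t1]

lemma hm_is (L : Set (Option (ZMod N))) : (hm L).IsHypermap := by
  intro i
  fin_cases i
  · exact ⟨th_inv _, th_ne _⟩
  · exact ⟨t1_inv, t1_ne⟩
  · exact ⟨th_inv _, th_ne _⟩

lemma lab_th (L : Set (Option (ZMod N))) (x) : lab (th L x) = lab x := by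
  obtain ⟨⟨i, k⟩, s⟩ := x
  cases k <;> cases s <;> simp only [th] <;> split_ifs <;> simp [lab]

lemma th_empty (x : Fl N) : th ∅ x = (x.1, !x.2) := by
  obtain ⟨⟨i, k⟩, s⟩ := x
  cases k <;> cases s <;> simp [th]

lemma pd (L : Set (Option (ZMod N))) : (hm ∅).pdual (lab ⁻¹' L) = hm L := by
  unfold pdual hm
  congr 1
  funext i x
  obtain ⟨⟨j, k⟩, s⟩ := x
  have h2 : (2 : Fin 3) - 2 = 0 := rfl
  fin_cases i <;> cases k <;> cases s <;> simp [lab, th, h2] <;> split_ifs <;> simp_all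

lemma orb_invariant {F I : Type*} {fs : Set (F → F)} (g : F → I) (hg : ∀ f ∈ fs, ∀ x, g (f x) = g x)
    {x y : F} (h : orbitRel fs x y) : g x = g y := by
  induction h with
  | rel x y h => obtain ⟨f, hf, rfl⟩ := h; exact (hg f hf x).symm
  | refl => rfl
  | symm _ _ _ ih => exact ih.symm
  | trans _ _ _ _ _ h1 h2 => exact h1.trans h2

lemma orb_count {F I : Type*} {fs : Set (F → F)} (g : F → I) (hs : Function.Surjective g)
    (hg : ∀ f ∈ fs, ∀ x, g (f x) = g x) (hc : ∀ x y, g x = g y → orbitRel fs x y) :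
    orbitCount fs = Nat.card I := by
  unfold orbitCount
  refine Nat.card_congr (Equiv.ofBijective
    (Quotient.lift g (fun x y h => orb_invariant g hg h)) ⟨?_, ?_⟩)
  · rintro ⟨x⟩ ⟨y⟩ h
    exact Quotient.sound (hc x y h)
  · intro i
    obtain ⟨x, rfl⟩ := hs i
    exact ⟨Quotient.mk _ x, rfl⟩

lemma orb_step {F : Type*} {fs : Set (F → F)} {f : F → F} (hf : f ∈ fs) (x : F) :
    orbitRel fs x (f x) := Relation.EqvGen.rel _ _ ⟨f, hf, rfl⟩

lemma orb_symm {F : Type*} {fs : Set (F → F)} {x y : F} (h : orbitRel fs x y) :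
    orbitRel fs y x := Relation.EqvGen.symm _ _ h

lemma orb_trans {F : Type*} {fs : Set (F → F)} {x y z : F} (h : orbitRel fs x y)
    (h' : orbitRel fs y z) : orbitRel fs x z := Relation.EqvGen.trans _ _ _ h h'

lemma orb_refl {F : Type*} {fs : Set (F → F)} (x : F) : orbitRel fs x x := Relation.EqvGen.refl _

/-- hyperedge classes -/
lemma edge_conn (L : Set (Option (ZMod N))) [NeZero N] {fs : Set (Fl N → Fl N)}
    (h0 : th L ∈ fs) (h2 : th Lᶜ ∈ fs) (x y : Fl N) (h : lab x = lab y) : orbitRel fs x y := by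
  have hA : ∀ x : Fl N, orbitRel fs x (x.1, !x.2) := by
    rintro ⟨⟨i, k⟩, s⟩
    by_cases hL : lab ((i, k), s) ∈ L
    · have := orb_step h2 ((i, k), s)
      cases k <;> cases s <;> simp_all [th, lab]
    · have := orb_step h0 ((i, k), s)
      cases k <;> cases s <;> simp_all [th, lab]
  have hB : ∀ i : ZMod N, orbitRel fs ((i, K3.b), true) ((i, K3.d), false) := by
    intro i
    by_cases hL : some i ∈ L
    · have := orb_step h0 ((i, K3.b), true)
      simp_all [th]
    · have := orb_step h2 ((i, K3.b), true)
      simp_all [th]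
  have hC : ∀ i : ZMod N, orbitRel fs ((i, K3.c), true) ((i + 1, K3.c), false) := by
    intro i
    by_cases hL : none ∈ L
    · have := orb_step h0 ((i, K3.c), true)
      simp_all [th]
    · have := orb_step h2 ((i, K3.c), true)
      simp_all [th]
  have hC' : ∀ k : ℕ, orbitRel fs ((0, K3.c), true) (((k : ZMod N), K3.c), true) := by
    intro k
    induction k with
    | zero => simpa using orb_refl _
    | succ k ih =>
      refine orb_trans ih (orb_trans (hC _) ?_)
      simpa using hA ((((k : ZMod N) + 1), K3.c), false)
  have key : ∀ x : Fl N, orbitRel fs x (match lab x with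
      | none => ((0, K3.c), true)
      | some i => ((i, K3.b), true)) := by
    rintro ⟨⟨i, k⟩, s⟩
    have hc := hC' i.val
    rw [ZMod.natCast_zmod_val] at hc
    have a1 := hA ((i, K3.c), false)
    have a2 := hA ((i, K3.b), false)
    have a3 := hA ((i, K3.d), true)
    simp only [Bool.not_true, Bool.not_false] at a1 a2 a3
    cases k <;> cases s <;> simp only [lab]
    · exact a2
    · exact orb_refl _
    · exact orb_trans a1 (orb_symm hc)
    · exact orb_symm hc
    · exact orb_symm (hB i)
    · exact orb_trans a3 (orb_symm (hB i))
  have k1 := key x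
  have k2 := key y
  rw [h] at k1
  exact orb_trans k1 (orb_symm k2)

lemma lab_surj : Function.Surjective (lab (N := N)) := by
  rintro (_ | i)
  · exact ⟨((0, K3.c), true), rfl⟩
  · exact ⟨((i, K3.b), true), rfl⟩

lemma hm_e [NeZero N] (L : Set (Option (ZMod N))) : (hm L).e = N + 1 := by
  have : (hm L).e = Nat.card (Option (ZMod N)) := by
    refine orb_count lab lab_surj ?_ ?_
    · rintro f (rfl | rfl) x
      · exact lab_th _ _
      · exact lab_th _ _
    · exact edge_conn L (by simp [hm]) (by simp [hm])
  rw [this]; simp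

lemma hm_edges [NeZero N] : (hm (∅ : Set (Option (ZMod N)))).edges
    = Set.range (fun o => (lab (N := N)) ⁻¹' {o}) := by
  have key : ∀ x : Fl N, {y | orbitRel {(hm (∅ : Set (Option (ZMod N)))).theta 0, (hm ∅).theta 2} x y}
      = lab ⁻¹' {lab x} := by
    intro x
    ext y
    constructor
    · intro h
      refine (orb_invariant lab ?_ h).symm
      rintro f (rfl | rfl) x
      · exact lab_th _ _
      · exact lab_th _ _
    · intro h
      exact edge_conn ∅ (by simp [hm]) (by simp [hm]) _ _ (Eq.symm h)
  ext s
  constructor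
  · rintro ⟨x, rfl⟩
    exact ⟨lab x, (key x).symm⟩
  · rintro ⟨o, rfl⟩
    obtain ⟨x, rfl⟩ := lab_surj o
    exact ⟨x, (key x).symm⟩

lemma hm_c [NeZero N] (L : Set (Option (ZMod N))) : (hm L).c = 1 := by
  have : (hm L).c = Nat.card Unit := by
    refine orb_count (fun _ => ()) (fun _ => ⟨((0, K3.c), true), rfl⟩) (fun _ _ _ => rfl) ?_
    set fs : Set (Fl N → Fl N) := {(hm L).theta 0, (hm L).theta 1, (hm L).theta 2} with hfs
    have E := edge_conn L (fs := fs) (by simp [hm, fs]) (by simp [hm, fs])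
    have h1 : t1 ∈ fs := by simp [hm, fs]
    have key : ∀ x : Fl N, orbitRel fs x ((0, K3.c), true) := by
      rintro ⟨⟨i, k⟩, s⟩
      have hb : orbitRel fs ((i, K3.b), false) ((0, K3.c), true) :=
        orb_trans (orb_step h1 _) (E _ _ rfl)
      cases k
      · exact orb_trans (E _ ((i, K3.b), false) rfl) hb
      · exact E _ _ rfl
      · exact orb_trans (E _ ((i, K3.b), false) rfl) hb
    exact fun x y _ => orb_trans (key x) (orb_symm (key y))
  rw [this]; simp

/-- count, `none ∈ L` -/
lemma cnt_mem [NeZero N] (L : Set (Option (ZMod N))) (hL : none ∈ L) :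
    orbitCount {th L, t1} = L.ncard := by
  rw [← Nat.card_coe_set_eq]
  let gp : ZMod N × K3 → L := fun x => match x with
    | (_, K3.b) => ⟨none, hL⟩
    | (i, K3.c) => if h : some i ∈ L then ⟨some i, h⟩ else ⟨none, hL⟩
    | (i, K3.d) => if h : some i ∈ L then ⟨some i, h⟩ else ⟨none, hL⟩
  let g : Fl N → L := fun x => match x with
    | (x, true) => gp x
    | (x, false) => gp (t1 (x, false)).1
  set fs : Set (Fl N → Fl N) := {th L, t1} with hfs
  have h0 : th L ∈ fs := by simp [fs]
  have h1 : t1 ∈ fs := by simp [fs]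
  refine orb_count g ?_ ?_ ?_
  · rintro ⟨o, ho⟩
    cases o with
    | none => exact ⟨((0, K3.b), true), rfl⟩
    | some i => exact ⟨((i, K3.c), true), by simp [g, gp, ho]⟩
  · rintro f (rfl | rfl) ⟨⟨i, k⟩, s⟩
    · by_cases hi : some i ∈ L <;> cases k <;> cases s <;> simp [g, gp, th, t1, hi, hL]
    · cases k <;> cases s <;> simp [g, gp, t1]
  · have st : ∀ x, orbitRel fs x (t1 (th L x)) := fun x => orb_trans (orb_step h0 x) (orb_step h1 _)
    have hcd : ∀ i : ZMod N, orbitRel fs ((i, K3.c), true) ((i, K3.d), true) := by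
      intro i
      simpa [th, t1, hL] using st ((i, K3.c), true)
    have hbc : ∀ i : ZMod N, some i ∉ L → orbitRel fs ((i, K3.b), true) ((i, K3.c), true) := by
      intro i hi
      simpa [th, t1, hi] using st ((i, K3.b), true)
    have hbb : ∀ i : ZMod N, orbitRel fs ((i, K3.b), true) ((i + 1, K3.b), true) := by
      intro i
      by_cases hi : some i ∈ L
      · simpa [th, t1, hi] using st ((i, K3.b), true)
      · refine orb_trans (hbc i hi) (orb_trans (hcd i) ?_)
        simpa [th, t1, hi] using st ((i, K3.d), true)
    have hb0 : ∀ k : ℕ, orbitRel fs ((0, K3.b), true) (((k : ZMod N), K3.b), true) := by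
      intro k
      induction k with
      | zero => simpa using orb_refl _
      | succ k ih =>
        refine orb_trans ih ?_
        simpa using hbb k
    have hb : ∀ i : ZMod N, orbitRel fs ((0, K3.b), true) ((i, K3.b), true) := by
      intro i
      have := hb0 i.val
      rwa [ZMod.natCast_zmod_val] at this
    have keyp : ∀ x : ZMod N × K3, orbitRel fs (x, true) (match (gp x).1 with
      | none => ((0, K3.b), true)
      | some i => ((i, K3.c), true)) := by
      rintro ⟨i, k⟩
      by_cases hi : some i ∈ L <;> cases k <;> simp only [gp, hi, dite_true, dite_false]
      · exact orb_symm (hb i)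
      · exact orb_refl _
      · exact orb_symm (hcd i)
      · exact orb_symm (hb i)
      · exact orb_trans (orb_symm (hbc i hi)) (orb_symm (hb i))
      · exact orb_trans (orb_symm (hcd i)) (orb_trans (orb_symm (hbc i hi)) (orb_symm (hb i)))
    have key : ∀ x : Fl N, orbitRel fs x (match (g x).1 with
      | none => ((0, K3.b), true)
      | some i => ((i, K3.c), true)) := by
      rintro ⟨x, s⟩
      cases s
      · refine orb_trans ?_ (keyp (t1 (x, false)).1)
        have := orb_step h1 (x, false)
        obtain ⟨i, k⟩ := x
        cases k <;> exact this
      · exact keyp x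
    intro x y h
    have k1 := key x
    rw [h] at k1
    exact orb_trans k1 (orb_symm (key y))

/-- count, `L` all but `none` -/
lemma cnt_univ [NeZero N] (L : Set (Option (ZMod N))) (hL : none ∉ L) (hU : ∀ i, some i ∈ L) :
    orbitCount {th L, t1} = 2 := by
  have h2 : 2 = Nat.card Bool := by simp
  rw [h2]
  let gp : ZMod N × K3 → Bool := fun x => match x with
    | (_, K3.b) => true
    | (i, K3.c) => false
    | (i, K3.d) => false
  let g : Fl N → Bool := fun x => match x with
    | (x, true) => gp x
    | (x, false) => gp (t1 (x, false)).1
  set fs : Set (Fl N → Fl N) := {th L, t1} with hfs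
  have h0 : th L ∈ fs := by simp [fs]
  have h1 : t1 ∈ fs := by simp [fs]
  refine orb_count g ?_ ?_ ?_
  · rintro (_ | _)
    · exact ⟨((0, K3.c), true), rfl⟩
    · exact ⟨((0, K3.b), true), rfl⟩
  · rintro f (rfl | rfl) ⟨⟨i, k⟩, s⟩
    · cases k <;> cases s <;> simp [g, gp, th, t1, hU, hL]
    · cases k <;> cases s <;> simp [g, gp, t1]
  · have st : ∀ x, orbitRel fs x (t1 (th L x)) := fun x => orb_trans (orb_step h0 x) (orb_step h1 _)
    have hdc : ∀ i : ZMod N, orbitRel fs ((i, K3.d), true) ((i, K3.c), true) := by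
      intro i
      simpa [th, t1, hU] using st ((i, K3.d), true)
    have hbb : ∀ i : ZMod N, orbitRel fs ((i, K3.b), true) ((i + 1, K3.b), true) := by
      intro i
      simpa [th, t1, hU] using st ((i, K3.b), true)
    have hcc : ∀ i : ZMod N, orbitRel fs ((i, K3.c), true) ((i + 1, K3.c), true) := by
      intro i
      refine orb_symm (orb_trans ?_ (hdc i))
      simpa [th, t1, hL] using st ((i + 1, K3.c), true)
    have hb0 : ∀ k : ℕ, orbitRel fs ((0, K3.b), true) (((k : ZMod N), K3.b), true) ∧
        orbitRel fs ((0, K3.c), true) (((k : ZMod N), K3.c), true) := by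
      intro k
      induction k with
      | zero => simpa using ⟨orb_refl _, orb_refl _⟩
      | succ k ih =>
        push_cast
        exact ⟨orb_trans ih.1 (hbb k), orb_trans ih.2 (hcc k)⟩
    have hb : ∀ i : ZMod N, orbitRel fs ((0, K3.b), true) ((i, K3.b), true) ∧
        orbitRel fs ((0, K3.c), true) ((i, K3.c), true) := by
      intro i
      have := hb0 i.val
      rwa [ZMod.natCast_zmod_val] at this
    have keyp : ∀ x : ZMod N × K3, orbitRel fs (x, true) (match gp x with
      | true => ((0, K3.b), true)
      | false => ((0, K3.c), true)) := by
      rintro ⟨i, k⟩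
      cases k
      · exact orb_symm (hb i).1
      · exact orb_symm (hb i).2
      · exact orb_trans (hdc i) (orb_symm (hb i).2)
    have key : ∀ x : Fl N, orbitRel fs x (match g x with
      | true => ((0, K3.b), true)
      | false => ((0, K3.c), true)) := by
      rintro ⟨x, s⟩
      cases s
      · refine orb_trans ?_ (keyp (t1 (x, false)).1)
        have := orb_step h1 (x, false)
        obtain ⟨i, k⟩ := x
        cases k <;> exact this
      · exact keyp x
    intro x y h
    have k1 := key x
    rw [h] at k1
    exact orb_trans k1 (orb_symm (key y))

lemma exists_nxt [NeZero N] (B : Set (ZMod N)) (hB : ∃ j, j ∉ B) :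
    ∃ nxt : ZMod N → ZMod N, (∀ i, nxt i ∉ B) ∧ (∀ i ∉ B, nxt i = i) ∧
      (∀ i ∈ B, nxt (i + 1) = nxt i) ∧
      (∀ r : ZMod N → ZMod N → Prop, (∀ i, r i i) → (∀ i j k, r i j → r j k → r i k) →
        (∀ i ∈ B, r i (i + 1)) → ∀ i, r i (nxt i)) := by
  obtain ⟨j, hj⟩ := hB
  have ex : ∀ i : ZMod N, ∃ k : ℕ, i + (k : ZMod N) ∉ B := fun i =>
    ⟨(j - i).val, by rw [ZMod.natCast_zmod_val]; simpa using hj⟩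
  have step : ∀ i ∈ B, Nat.find (ex i) = Nat.find (ex (i + 1)) + 1 := by
    intro i hi
    rw [Nat.find_comp_succ (ex i)
      (by obtain ⟨k, hk⟩ := ex (i + 1); exact ⟨k, by push_cast; convert hk using 1; ring⟩)
      (by simpa using hi)]
    congr 1
    apply Nat.find_congr'
    intro n
    push_cast
    rw [add_assoc, add_comm (1 : ZMod N)]
  refine ⟨fun i => i + (Nat.find (ex i) : ZMod N), fun i => Nat.find_spec (ex i), ?_, ?_, ?_⟩
  · intro i hi
    have : Nat.find (ex i) = 0 := by
      rw [Nat.find_eq_zero]; simpa using hi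
    simp [this]
  · intro i hi
    simp only [step i hi]
    push_cast; ring
  · intro r hr ht hs
    have : ∀ k i, Nat.find (ex i) = k → r i (i + (k : ZMod N)) := by
      intro k
      induction k with
      | zero => intro i _; simpa using hr i
      | succ k ih =>
        intro i hk
        have hi : i ∈ B := by
          by_contra hi
          have : Nat.find (ex i) = 0 := by
            rw [Nat.find_eq_zero]; simpa using hi
          omega
        have := ih (i + 1) (by have := step i hi; omega)
        refine ht _ _ _ (hs i hi) ?_
        convert this using 1
        push_cast; ring
    exact fun i => this _ i rfl

lemma cnt_not [NeZero N] (L : Set (Option (ZMod N))) (hL : none ∉ L) (hU : ∃ i, some i ∉ L) :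
    orbitCount {th L, t1} = Nat.card {i : ZMod N // some i ∉ L} := by
  obtain ⟨nxt, n1, n2, n3, n4⟩ := exists_nxt {i : ZMod N | some i ∈ L} hU
  simp only [Set.mem_ofPred_eq] at n1 n2 n3 n4
  let gp : ZMod N × K3 → {i : ZMod N // some i ∉ L} := fun x => match x with
    | (i, K3.b) => ⟨nxt i, n1 _⟩
    | (i, K3.c) => ⟨nxt i, n1 _⟩
    | (i, K3.d) => ⟨nxt (i + 1), n1 _⟩
  let g : Fl N → {i : ZMod N // some i ∉ L} := fun x => match x with
    | (x, true) => gp x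
    | (x, false) => gp (t1 (x, false)).1
  set fs : Set (Fl N → Fl N) := {th L, t1} with hfs
  have h0 : th L ∈ fs := by simp [fs]
  have h1 : t1 ∈ fs := by simp [fs]
  refine orb_count g ?_ ?_ ?_
  · rintro ⟨i, hi⟩
    exact ⟨((i, K3.b), true), by simp [g, gp, n2 i hi]⟩
  · rintro f (rfl | rfl) ⟨⟨i, k⟩, s⟩
    · by_cases hi : some i ∈ L <;> cases k <;> cases s <;> simp [g, gp, th, t1, hi, hL, n3]
    · cases k <;> cases s <;> simp [g, gp, t1]
  · have st : ∀ x, orbitRel fs x (t1 (th L x)) := fun x => orb_trans (orb_step h0 x) (orb_step h1 _)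
    have hdc : ∀ i : ZMod N, orbitRel fs ((i, K3.d), true) ((i + 1, K3.c), true) := by
      intro i
      apply orb_symm
      simpa [th, t1, hL] using st ((i + 1, K3.c), true)
    have hbb : ∀ i : ZMod N, some i ∈ L → orbitRel fs ((i, K3.b), true) ((i + 1, K3.b), true) := by
      intro i hi
      simpa [th, t1, hi] using st ((i, K3.b), true)
    have hcc : ∀ i : ZMod N, some i ∈ L → orbitRel fs ((i, K3.c), true) ((i + 1, K3.c), true) := by
      intro i hi
      refine orb_trans (orb_symm ?_) (hdc i)
      simpa [th, t1, hi] using st ((i, K3.d), true)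
    have hbc : ∀ i : ZMod N, some i ∉ L → orbitRel fs ((i, K3.b), true) ((i, K3.c), true) := by
      intro i hi
      simpa [th, t1, hi] using st ((i, K3.b), true)
    have hb := n4 (fun i j => orbitRel fs ((i, K3.b), true) ((j, K3.b), true))
      (fun _ => orb_refl _) (fun _ _ _ => orb_trans) hbb
    have hc := n4 (fun i j => orbitRel fs ((i, K3.c), true) ((j, K3.c), true))
      (fun _ => orb_refl _) (fun _ _ _ => orb_trans) hcc
    have keyp : ∀ x : ZMod N × K3, orbitRel fs (x, true) (((gp x).1, K3.c), true) := by
      rintro ⟨i, k⟩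
      cases k
      · exact orb_trans (hb i) (hbc _ (n1 i))
      · exact hc i
      · exact orb_trans (hdc i) (hc _)
    have key : ∀ x : Fl N, orbitRel fs x (((g x).1, K3.c), true) := by
      rintro ⟨x, s⟩
      cases s
      · refine orb_trans ?_ (keyp (t1 (x, false)).1)
        have := orb_step h1 (x, false)
        obtain ⟨i, k⟩ := x
        cases k <;> exact this
      · exact keyp x
    intro x y h
    have k1 := key x
    rw [h] at k1
    exact orb_trans k1 (orb_symm (key y))

lemma card_not [NeZero N] (L : Set (Option (ZMod N))) (hL : none ∉ L) :
    Nat.card {i : ZMod N // some i ∉ L} + L.ncard = N := by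
  have h1 : L = some '' {i : ZMod N | some i ∈ L} := by
    ext o
    cases o <;> simp [hL]
  have h2 : L.ncard = {i : ZMod N | some i ∈ L}.ncard := by
    conv_lhs => rw [h1]
    exact Set.ncard_image_of_injective _ (Option.some_injective _)
  have h3 : Nat.card {i : ZMod N // some i ∉ L} = {i : ZMod N | some i ∈ L}ᶜ.ncard := by
    rw [← Nat.card_coe_set_eq]; rfl
  rw [h2, h3, add_comm, Set.ncard_add_ncard_compl]
  simp

lemma card_compl [NeZero N] (L : Set (Option (ZMod N))) : L.ncard + Lᶜ.ncard = N + 1 := by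
  rw [Set.ncard_add_ncard_compl]; simp

lemma cnt_lt [NeZero N] (L : Set (Option (ZMod N))) (hL : none ∉ L) (h : L.ncard < N) :
    orbitCount {th L, t1} + L.ncard = N := by
  have hc := card_not L hL
  rw [cnt_not L hL, hc]
  have : 0 < Nat.card {i : ZMod N // some i ∉ L} := by omega
  obtain ⟨⟨i, hi⟩⟩ := (Nat.card_pos_iff.1 this).1
  exact ⟨i, hi⟩

lemma cnt_eq [NeZero N] (L : Set (Option (ZMod N))) (hL : none ∉ L) (h : L.ncard = N) :
    orbitCount {th L, t1} = 2 := by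
  have hc := card_not L hL
  apply cnt_univ L hL
  intro i
  by_contra hi
  have : 0 < Nat.card {i : ZMod N // some i ∉ L} := Nat.card_pos_iff.2 ⟨⟨⟨i, hi⟩⟩, inferInstance⟩
  omega

lemma hm_genus [NeZero N] (L : Set (Option (ZMod N))) :
    (hm L).eulerGenus = 2 * (N : ℤ) + 1 - orbitCount {th L, t1} - orbitCount {th Lᶜ, t1} := by
  have hv : (hm L).v = orbitCount {th Lᶜ, t1} := by
    rw [Set.pair_comm]; rfl
  have hf : (hm L).f = orbitCount {th L, t1} := rfl
  have hk : Nat.card (Fl N) = 6 * N := by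
    have : Fintype.card K3 = 3 := rfl
    simp [Nat.card_eq_fintype_card, this]; ring
  unfold eulerGenus chi
  rw [hm_c, hm_e, hv, hf, hk]
  push_cast
  omega

end S17

open PreHypermap in
/-- For every `n ≥ 3` there is a connected hypermap `T` with hyperedges `e₁, …, e_n` such
that for all `A ⊆ E(T)`: if `e_n ∉ A` and `|A| ≤ n - 2` then `ε(T^A) = 2 |A|`; if
(`e_n ∈ A` and `|A| = 1`) or (`e_n ∉ A` and `|A| = n - 1`) then `ε(T^A) = 2n - 4`;
if `e_n ∈ A` and `2 ≤ |A| ≤ n` then `ε(T^A) = 2n - 2 |A|`. -/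
theorem statement_17 (n : ℕ) (hn : 3 ≤ n) :
    ∃ (F : Type) (_ : Fintype F) (T : PreHypermap F) (e : Fin n → Set F),
      T.IsHypermap ∧ T.Connected ∧
      Function.Injective e ∧ T.edges = Set.range e ∧
      ∀ A ⊆ T.edges,
        (e ⟨n - 1, by omega⟩ ∉ A → A.ncard ≤ n - 2 →
          (T.pdual (⋃₀ A)).eulerGenus = 2 * (A.ncard : ℤ)) ∧
        ((e ⟨n - 1, by omega⟩ ∈ A ∧ A.ncard = 1) ∨
            (e ⟨n - 1, by omega⟩ ∉ A ∧ A.ncard = n - 1) →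
          (T.pdual (⋃₀ A)).eulerGenus = 2 * (n : ℤ) - 4) ∧
        (e ⟨n - 1, by omega⟩ ∈ A → 2 ≤ A.ncard → A.ncard ≤ n →
          (T.pdual (⋃₀ A)).eulerGenus = 2 * (n : ℤ) - 2 * (A.ncard : ℤ)) := by
  obtain ⟨M, rfl⟩ : ∃ M, n = M + 1 + 1 := ⟨n - 2, by omega⟩
  let φ : Fin (M + 1 + 1) ≃ Option (ZMod (M + 1)) := finSuccEquivLast
  have hφ : φ ⟨M + 1 + 1 - 1, by omega⟩ = none := finSuccEquivLast_last
  let E : Option (ZMod (M + 1)) → Set (S17.Fl (M + 1)) := fun o => S17.lab ⁻¹' {o}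
  have hE : Function.Injective E :=
    (Set.preimage_injective.2 S17.lab_surj).comp Set.singleton_injective
  have hedge : (S17.hm (∅ : Set (Option (ZMod (M + 1))))).edges = Set.range E := S17.hm_edges
  refine ⟨S17.Fl (M + 1), inferInstance, S17.hm ∅, fun k => E (φ k), S17.hm_is _, S17.hm_c _,
    hE.comp φ.injective, ?_, ?_⟩
  · rw [hedge]
    exact (φ.surjective.range_comp E).symm
  · intro A hA
    rw [hedge] at hA
    obtain ⟨L, rfl⟩ := Set.subset_range_iff_exists_image_eq.1 hA
    have hU : ⋃₀ (E '' L) = S17.lab ⁻¹' L := by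
      ext x; simp [E]
    have hc : (E '' L).ncard = L.ncard := Set.ncard_image_of_injective _ hE
    have hm : E none ∈ E '' L ↔ none ∈ L := hE.mem_set_image
    simp only [hφ]
    rw [hU, hc, hm, S17.pd, S17.hm_genus]
    have hcc := S17.card_compl L
    by_cases h : none ∈ L
    · have c1 := S17.cnt_mem L h
      have h' : none ∉ Lᶜ := by simpa using h
      have c2 := S17.cnt_lt Lᶜ h'
      have c3 := S17.cnt_eq Lᶜ h'
      have hpos : 0 < L.ncard := (Set.ncard_pos (Set.toFinite L)).2 ⟨_, h⟩
      simp only [h, not_true_eq_false, true_and, false_and, or_false, false_imp_iff, true_imp_iff]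
      push_cast
      refine ⟨fun h1 => ?_, fun h1 h2 => ?_⟩
      · have := c3 (by omega)
        omega
      · have := c2 (by omega)
        omega
    · have c1 := S17.cnt_mem Lᶜ (by simpa using h)
      have c2 := S17.cnt_lt L h
      have c3 := S17.cnt_eq L h
      simp only [h, not_false_eq_true, true_and, false_and, false_or, false_imp_iff, true_imp_iff]
      push_cast
      refine ⟨fun h1 => ?_, fun h1 => ?_, trivial⟩
      · have := c2 (by omega)
        omega
      · have := c3 (by omega)
        omega
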